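/- arXiv:math/0107122 — 3 statements merged into one kernel-verified Lean document; each statement's English description precedes it below -/
import Mathlib

section
/- Let a, b, c ∈ ℝ and set P(t) = t³ + at² + bt + c. On an open set U ⊆ ℝ² on which R² − R¹ > 0, P(R¹) > 0 and P(R²) < 0 (so that the metric below is positive definite), consider the spherical-conical metric with inverse coefficients G¹¹ = 4P(R¹)/(R² − R¹) and G²² = −4P(R²)/(R² − R¹). Then: (i) the coefficients defined by ∂₂G¹¹ = −2AG¹¹ and ∂₁G²² = −2BG²² are A = 1/(2(R² − R¹)) and B = 1/(2(R¹ − R²)), independent of a, b, c; and (ii) the constant-curvature-one condition (∂₂A + A²)G²² + (A/2)∂₂G²² + (∂₁B + B²)G¹¹ + (B/2)∂₁G¹¹ + 1 = 0 holds on U for all a, b, c. -/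
/-- First partial derivative `∂₁ = ∂/∂R¹` of a function on `ℝ²`. -/
noncomputable def pd1 (f : ℝ × ℝ → ℝ) (p : ℝ × ℝ) : ℝ := fderiv ℝ f p (1, 0)

/-- Second partial derivative `∂₂ = ∂/∂R²` of a function on `ℝ²`. -/
noncomputable def pd2 (f : ℝ × ℝ → ℝ) (p : ℝ × ℝ) : ℝ := fderiv ℝ f p (0, 1)

/-!
For the metric `((R² − R¹)/4) ((dR¹)²/f(R¹) − (dR²)²/g(R²))` with arbitrary differentiable `f`, `g`,
the curvature expression collapses to
`((R² − R¹) (f′(R¹) + g′(R²)) − 2 (g(R²) − f(R¹))) / (R² − R¹)³`. For `f = g = P` the numerator is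
twice the error of the trapezoid rule for `∫ P′` over `[R¹, R²]`; when `P` is a cubic, `P′` is
quadratic and this error is exactly the leading coefficient of `P` times `(R² − R¹)³ / 2`.
-/

section PartialDerivatives

variable {u : ℝ × ℝ → ℝ} {p : ℝ × ℝ}

theorem hasDerivAt_pd1 (hu : DifferentiableAt ℝ u p) :
    HasDerivAt (fun t ↦ u (t, p.2)) (pd1 u p) p.1 :=
  hu.hasFDerivAt.comp_hasDerivAt p.1 ((hasDerivAt_id p.1).prodMk (hasDerivAt_const p.1 p.2))

theorem hasDerivAt_pd2 (hu : DifferentiableAt ℝ u p) :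
    HasDerivAt (fun t ↦ u (p.1, t)) (pd2 u p) p.2 :=
  hu.hasFDerivAt.comp_hasDerivAt p.2 ((hasDerivAt_const p.2 p.1).prodMk (hasDerivAt_id p.2))

theorem pd1_div_snd_sub_fst (hu : DifferentiableAt ℝ u p) (hp : p.1 ≠ p.2) :
    pd1 (fun q ↦ u q / (q.2 - q.1)) p = pd1 u p / (p.2 - p.1) + u p / (p.2 - p.1) ^ 2 := by
  have hd : p.2 - p.1 ≠ 0 := sub_ne_zero.2 hp.symm
  have hquot : DifferentiableAt ℝ (fun q : ℝ × ℝ ↦ u q / (q.2 - q.1)) p := by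
    fun_prop (disch := exact hd)
  rw [(hasDerivAt_pd1 hquot).unique
    ((hasDerivAt_pd1 hu).fun_div ((hasDerivAt_id' p.1).const_sub p.2) hd)]
  field_simp
  ring

theorem pd2_div_snd_sub_fst (hu : DifferentiableAt ℝ u p) (hp : p.1 ≠ p.2) :
    pd2 (fun q ↦ u q / (q.2 - q.1)) p = pd2 u p / (p.2 - p.1) - u p / (p.2 - p.1) ^ 2 := by
  have hd : p.2 - p.1 ≠ 0 := sub_ne_zero.2 hp.symm
  have hquot : DifferentiableAt ℝ (fun q : ℝ × ℝ ↦ u q / (q.2 - q.1)) p := by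
    fun_prop (disch := exact hd)
  rw [(hasDerivAt_pd2 hquot).unique
    ((hasDerivAt_pd2 hu).fun_div ((hasDerivAt_id' p.2).sub_const p.1) hd)]
  field_simp

end PartialDerivatives

/-- The Gaussian curvature of the diagonal metric with inverse coefficients `G11` and `G22`, written
through the coefficients `A` and `B` that are determined by `∂₂G¹¹ = −2AG¹¹` and `∂₁G²² = −2BG²²`;
those equations are not part of the definition. -/
noncomputable def diagonalCurvature (G11 G22 A B : ℝ × ℝ → ℝ) (p : ℝ × ℝ) : ℝ :=
  -((pd2 A p + A p ^ 2) * G22 p + A p / 2 * pd2 G22 p +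
    (pd1 B p + B p ^ 2) * G11 p + B p / 2 * pd1 G11 p)

/-- The inverse coefficient `G¹¹` of the Liouville metric
`((R² − R¹)/4) ((dR¹)²/f(R¹) − (dR²)²/g(R²))`, of which the spherical-conical metric is the case
`f = g = P`. -/
noncomputable def liouvilleG11 (f : ℝ → ℝ) (p : ℝ × ℝ) : ℝ := 4 * f p.1 / (p.2 - p.1)

/-- The inverse coefficient `G²²` of the Liouville metric
`((R² − R¹)/4) ((dR¹)²/f(R¹) − (dR²)²/g(R²))`. -/
noncomputable def liouvilleG22 (g : ℝ → ℝ) (p : ℝ × ℝ) : ℝ := -(4 * g p.2 / (p.2 - p.1))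

/-- The coefficient `A` of a Liouville metric, see `pd2_liouvilleG11`. -/
noncomputable def liouvilleA (p : ℝ × ℝ) : ℝ := 1 / (2 * (p.2 - p.1))

/-- The coefficient `B` of a Liouville metric, see `pd1_liouvilleG22`. -/
noncomputable def liouvilleB (p : ℝ × ℝ) : ℝ := 1 / (2 * (p.1 - p.2))

section Liouville

variable {f g : ℝ → ℝ} {p : ℝ × ℝ}

theorem liouvilleB_eq_neg (p : ℝ × ℝ) : liouvilleB p = -liouvilleA p := by
  rw [liouvilleB, liouvilleA, ← neg_sub p.2 p.1, mul_neg, one_div_neg_eq_neg_one_div]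

theorem pd1_liouvilleG11 (hf : DifferentiableAt ℝ f p.1) (hp : p.1 ≠ p.2) :
    pd1 (liouvilleG11 f) p =
      4 * deriv f p.1 / (p.2 - p.1) + 4 * f p.1 / (p.2 - p.1) ^ 2 := by
  have hu : DifferentiableAt ℝ (fun q : ℝ × ℝ ↦ 4 * f q.1) p := by fun_prop
  have hpd : pd1 (fun q ↦ 4 * f q.1) p = 4 * deriv f p.1 :=
    (hasDerivAt_pd1 hu).unique (hf.hasDerivAt.const_mul 4)
  exact (pd1_div_snd_sub_fst hu hp).trans (by rw [hpd])

theorem pd2_liouvilleG11 (hf : DifferentiableAt ℝ f p.1) (hp : p.1 ≠ p.2) :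
    pd2 (liouvilleG11 f) p = -2 * liouvilleA p * liouvilleG11 f p := by
  have hu : DifferentiableAt ℝ (fun q : ℝ × ℝ ↦ 4 * f q.1) p := by fun_prop
  have hpd : pd2 (fun q ↦ 4 * f q.1) p = 0 :=
    (hasDerivAt_pd2 hu).unique (hasDerivAt_const p.2 (4 * f p.1))
  refine (pd2_div_snd_sub_fst hu hp).trans ?_
  have hd : p.2 - p.1 ≠ 0 := sub_ne_zero.2 hp.symm
  rw [hpd, liouvilleA, liouvilleG11]
  field_simp
  ring

theorem liouvilleG22_eq (g : ℝ → ℝ) : liouvilleG22 g = fun q ↦ -4 * g q.2 / (q.2 - q.1) := by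
  funext q
  rw [liouvilleG22]
  ring

theorem pd1_liouvilleG22 (hg : DifferentiableAt ℝ g p.2) (hp : p.1 ≠ p.2) :
    pd1 (liouvilleG22 g) p = -2 * liouvilleB p * liouvilleG22 g p := by
  have hu : DifferentiableAt ℝ (fun q : ℝ × ℝ ↦ -4 * g q.2) p := by fun_prop
  have hpd : pd1 (fun q ↦ -4 * g q.2) p = 0 :=
    (hasDerivAt_pd1 hu).unique (hasDerivAt_const p.1 (-4 * g p.2))
  have hd : p.2 - p.1 ≠ 0 := sub_ne_zero.2 hp.symm
  rw [liouvilleG22_eq, pd1_div_snd_sub_fst hu hp, hpd, liouvilleB_eq_neg, liouvilleA]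
  field_simp
  ring

theorem pd2_liouvilleG22 (hg : DifferentiableAt ℝ g p.2) (hp : p.1 ≠ p.2) :
    pd2 (liouvilleG22 g) p =
      -4 * deriv g p.2 / (p.2 - p.1) + 4 * g p.2 / (p.2 - p.1) ^ 2 := by
  have hu : DifferentiableAt ℝ (fun q : ℝ × ℝ ↦ -4 * g q.2) p := by fun_prop
  have hpd : pd2 (fun q ↦ -4 * g q.2) p = -4 * deriv g p.2 :=
    (hasDerivAt_pd2 hu).unique (hg.hasDerivAt.const_mul (-4))
  rw [liouvilleG22_eq, pd2_div_snd_sub_fst hu hp, hpd]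
  ring

theorem pd2_liouvilleA (hp : p.1 ≠ p.2) : pd2 liouvilleA p = -2 * liouvilleA p ^ 2 := by
  have hA : liouvilleA = fun q ↦ 1 / 2 / (q.2 - q.1) := by
    funext q
    rw [liouvilleA, div_div]
  have hpd : pd2 (fun _ ↦ 1 / 2) p = 0 := by simp [pd2]
  have hd : p.2 - p.1 ≠ 0 := sub_ne_zero.2 hp.symm
  rw [hA, pd2_div_snd_sub_fst (differentiableAt_const _) hp, hpd]
  field_simp
  ring

theorem pd1_liouvilleB (hp : p.1 ≠ p.2) : pd1 liouvilleB p = -2 * liouvilleB p ^ 2 := by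
  have hB : liouvilleB = fun q ↦ -1 / 2 / (q.2 - q.1) := by
    funext q
    rw [liouvilleB_eq_neg, liouvilleA, neg_div, neg_div, div_div]
  have hpd : pd1 (fun _ ↦ -1 / 2) p = 0 := by simp [pd1]
  have hd : p.2 - p.1 ≠ 0 := sub_ne_zero.2 hp.symm
  rw [hB, pd1_div_snd_sub_fst (differentiableAt_const _) hp, hpd]
  field_simp
  ring

theorem diagonalCurvature_liouville (hf : DifferentiableAt ℝ f p.1) (hg : DifferentiableAt ℝ g p.2)
    (hp : p.1 ≠ p.2) :
    diagonalCurvature (liouvilleG11 f) (liouvilleG22 g) liouvilleA liouvilleB p =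
      ((p.2 - p.1) * (deriv f p.1 + deriv g p.2) - 2 * (g p.2 - f p.1)) / (p.2 - p.1) ^ 3 := by
  have hd : p.2 - p.1 ≠ 0 := sub_ne_zero.2 hp.symm
  rw [diagonalCurvature, pd2_liouvilleA hp, pd1_liouvilleB hp, pd1_liouvilleG11 hf hp,
    pd2_liouvilleG22 hg hp, liouvilleB_eq_neg, liouvilleA, liouvilleG11, liouvilleG22]
  field_simp
  ring

end Liouville

section Cubic

variable {k a b c : ℝ} {P : ℝ → ℝ}

theorem hasDerivAt_cubic (hP : ∀ t, P t = k * t ^ 3 + a * t ^ 2 + b * t + c) (t : ℝ) :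
    HasDerivAt P (3 * k * t ^ 2 + 2 * a * t + b) t := by
  rw [funext hP]
  refine (((((hasDerivAt_pow 3 t).const_mul k).fun_add ((hasDerivAt_pow 2 t).const_mul a)).fun_add
    ((hasDerivAt_id' t).const_mul b)).add_const c).congr_deriv ?_
  push_cast
  ring

theorem trapezoid_error_cubic (hP : ∀ t, P t = k * t ^ 3 + a * t ^ 2 + b * t + c) (x y : ℝ) :
    (y - x) * (deriv P x + deriv P y) - 2 * (P y - P x) = k * (y - x) ^ 3 := by
  rw [(hasDerivAt_cubic hP x).deriv, (hasDerivAt_cubic hP y).deriv, hP, hP]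
  ring

theorem diagonalCurvature_liouville_cubic (hP : ∀ t, P t = k * t ^ 3 + a * t ^ 2 + b * t + c)
    {p : ℝ × ℝ} (hp : p.1 ≠ p.2) :
    diagonalCurvature (liouvilleG11 P) (liouvilleG22 P) liouvilleA liouvilleB p = k := by
  have hdiff (t : ℝ) : DifferentiableAt ℝ P t := (hasDerivAt_cubic hP t).differentiableAt
  rw [diagonalCurvature_liouville (hdiff _) (hdiff _) hp, trapezoid_error_cubic hP,
    mul_div_cancel_right₀ k (pow_ne_zero 3 (sub_ne_zero.2 hp.symm))]

end Cubic

theorem spherical_conical_quadrics_general (k a b c : ℝ) (P : ℝ → ℝ)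
    (hP : ∀ t, P t = k * t ^ 3 + a * t ^ 2 + b * t + c)
    (G11 G22 A B : ℝ × ℝ → ℝ)
    (hG11 : ∀ p : ℝ × ℝ, G11 p = 4 * P p.1 / (p.2 - p.1))
    (hG22 : ∀ p : ℝ × ℝ, G22 p = -(4 * P p.2 / (p.2 - p.1)))
    (hA : ∀ p : ℝ × ℝ, A p = 1 / (2 * (p.2 - p.1)))
    (hB : ∀ p : ℝ × ℝ, B p = 1 / (2 * (p.1 - p.2)))
    (p : ℝ × ℝ) (hp : p.1 ≠ p.2) :
    (pd2 G11 p = -2 * A p * G11 p ∧ pd1 G22 p = -2 * B p * G22 p) ∧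
      (pd2 A p + A p ^ 2) * G22 p + A p / 2 * pd2 G22 p +
        (pd1 B p + B p ^ 2) * G11 p + B p / 2 * pd1 G11 p + k = 0 := by
  obtain rfl : G11 = liouvilleG11 P := funext hG11
  obtain rfl : G22 = liouvilleG22 P := funext hG22
  obtain rfl : A = liouvilleA := funext hA
  obtain rfl : B = liouvilleB := funext hB
  have hdiff (t : ℝ) : DifferentiableAt ℝ P t := (hasDerivAt_cubic hP t).differentiableAt
  have hcurv := diagonalCurvature_liouville_cubic hP hp
  rw [diagonalCurvature, neg_eq_iff_add_eq_zero] at hcurv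
  exact ⟨⟨pd2_liouvilleG11 (hdiff _) hp, pd1_liouvilleG22 (hdiff _) hp⟩, hcurv⟩

/-- For the spherical-conical metric of quadrics, with
`G¹¹ = 4P(R¹)/(R² − R¹)`, `G²² = −4P(R²)/(R² − R¹)`, `P(t) = t³ + at² + bt + c`:
(i) the Christoffel coefficients are `A = 1/(2(R² − R¹))`, `B = 1/(2(R¹ − R²))`,
independent of `a, b, c`;
(ii) the constant-curvature-one condition holds for all `a, b, c`. -/
theorem spherical_conical_quadrics (a b c : ℝ) (P : ℝ → ℝ)
    (hP : ∀ t, P t = t ^ 3 + a * t ^ 2 + b * t + c)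
    (U : Set (ℝ × ℝ)) (hUopen : IsOpen U)
    (hU : ∀ p ∈ U, 0 < p.2 - p.1 ∧ 0 < P p.1 ∧ P p.2 < 0)
    (G11 G22 A B : ℝ × ℝ → ℝ)
    (hG11 : ∀ p : ℝ × ℝ, G11 p = 4 * P p.1 / (p.2 - p.1))
    (hG22 : ∀ p : ℝ × ℝ, G22 p = -(4 * P p.2 / (p.2 - p.1)))
    (hA : ∀ p : ℝ × ℝ, A p = 1 / (2 * (p.2 - p.1)))
    (hB : ∀ p : ℝ × ℝ, B p = 1 / (2 * (p.1 - p.2))) :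
    (∀ p ∈ U, pd2 G11 p = -2 * A p * G11 p ∧ pd1 G22 p = -2 * B p * G22 p) ∧
    (∀ p ∈ U,
      (pd2 A p + A p ^ 2) * G22 p + A p / 2 * pd2 G22 p +
        (pd1 B p + B p ^ 2) * G11 p + B p / 2 * pd1 G11 p + 1 = 0) := by
  have h (p) (hp : p ∈ U) := spherical_conical_quadrics_general 1 a b c P (by simpa using hP)
    G11 G22 A B hG11 hG22 hA hB p (sub_pos.1 (hU p hp).1).ne
  exact ⟨fun p hp ↦ (h p hp).1, fun p hp ↦ (h p hp).2⟩
end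

section
/- Let a, b, c ∈ ℝ and let p be a smooth positive function of R². On an open set U ⊆ ℝ² where R¹ ≠ R², p(R²) + p′(R²)(R¹ − R²) ≠ 0, a(R¹)² + bR¹ + c > 0 and a(R²)² + bR² + c + p(R²)² < 0, consider the metric with inverse coefficients G¹¹ = (R¹ − R²)²(a(R¹)² + bR¹ + c)/p(R²)² and G²² = −(R¹ − R²)²(a(R²)² + bR² + c + p(R²)²)/(p(R²) + p′(R²)(R¹ − R²))². Then: (i) the coefficients defined by ∂₂G¹¹ = −2AG¹¹ and ∂₁G²² = −2BG²² are A = 1/(R¹ − R²) + p′(R²)/p(R²) and B = 1/(R² − R¹) + p′(R²)/(p(R²) + p′(R²)(R¹ − R²)), independent of a, b, c; and (ii) the constant-curvature-one condition (∂₂A + A²)G²² + (A/2)∂₂G²² + (∂₁B + B²)G¹¹ + (B/2)∂₁G¹¹ + 1 = 0 holds on U for all a, b, c. -/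
/-!
Write `s = R¹ − R²`, `D = p + p′ s` and `G¹¹ = φ(R¹) / h₁²`, `G²² = ψ(R²) / h₂²` with the Lamé
coefficients `h₁ = p / s` and `h₂ = D / s`, so that `φ` is the quadratic and
`ψ(R²) = −(φ(R²) + p²)`. Since `φ` depends on `R¹` only and `ψ` on `R²` only, `A = ∂₂h₁ / h₁` and
`B = ∂₁h₂ / h₂`. The rotation coefficients `∂₂h₁ / h₂ = 1 / s` and `∂₁h₂ / h₁ = −1 / s` do not
involve `p`, and the curvature condition multiplied by `p D = s² h₁ h₂` reads
`ψ(R²) + φ(R¹) + (s / 2) (ψ′(R²) − φ′(R¹)) + p D = 0`.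
The terms in `p` cancel, and the rest is the exactness of the trapezoid rule for the linear
function `φ′`.
-/

open Topology

section Directional

variable {𝕜 E : Type*} [NontriviallyNormedField 𝕜] [NormedAddCommGroup E] [NormedSpace 𝕜 E]
  {x : E}

theorem fderiv_fun_div_apply {f g : E → 𝕜} (hf : DifferentiableAt 𝕜 f x)
    (hg : DifferentiableAt 𝕜 g x) (hx : g x ≠ 0) (v : E) :
    fderiv 𝕜 (fun y => f y / g y) x v =
      (fderiv 𝕜 f x v * g x - f x * fderiv 𝕜 g x v) / g x ^ 2 := by
  have hdiv : DifferentiableAt 𝕜 (fun y => f y / g y) x := by fun_prop (disch := assumption)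
  have hline := (hf.hasFDerivAt.hasLineDerivAt v).fun_div (hg.hasFDerivAt.hasLineDerivAt v)
    (by simpa using hx)
  rw [← hdiv.lineDeriv_eq_fderiv]
  exact hline.deriv.trans (by simp)

theorem fderiv_div_sq_apply {φ h : E → 𝕜} (hφ : DifferentiableAt 𝕜 φ x)
    (hh : DifferentiableAt 𝕜 h x) (hx : h x ≠ 0) (v : E) :
    fderiv 𝕜 (fun y => φ y / h y ^ 2) x v =
      fderiv 𝕜 φ x v / h x ^ 2 - 2 * (fderiv 𝕜 h x v / h x) * (φ x / h x ^ 2) := by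
  rw [fderiv_fun_div_apply hφ (hh.fun_pow 2) (pow_ne_zero 2 hx), fderiv_fun_pow 2 hh]
  simp only [Nat.add_one_sub_one, pow_one, nsmul_eq_mul, Nat.cast_ofNat, smul_apply,
    smul_eq_mul]
  field_simp

/-- One half of the Gauss equation of an orthogonal metric: the expression
`(∂ᵥA + A²) G + (A / 2) ∂ᵥG`, which in the constant-curvature-one condition occurs for
`(A, G²²)` in the direction `∂₂` and for `(B, G¹¹)` in the direction `∂₁`. -/
noncomputable def gaussTerm (A G : E → 𝕜) (v x : E) : 𝕜 :=
  (fderiv 𝕜 A x v + A x ^ 2) * G x + A x / 2 * fderiv 𝕜 G x v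

theorem gaussTerm_congr {A A' G G' : E → 𝕜} (hA : A =ᶠ[𝓝 x] A') (hG : G =ᶠ[𝓝 x] G') (v : E) :
    gaussTerm A G v x = gaussTerm A' G' v x := by
  simp only [gaussTerm, hA.fderiv_eq, hG.fderiv_eq, hA.eq_of_nhds, hG.eq_of_nhds]

/-- With `A = ∂ᵥh₁ / h₁` and `G = ψ / h₂²`, all derivatives of `h₁` and `h₂` cancel and only the
rotation coefficient `β = ∂ᵥh₁ / h₂` is differentiated. -/
theorem gaussTerm_of_fderiv_eq_mul [NeZero (2 : 𝕜)] {β ψ h₁ h₂ : E → 𝕜} {v : E}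
    (hβ : DifferentiableAt 𝕜 β x) (hψ : DifferentiableAt 𝕜 ψ x)
    (hh₁ : DifferentiableAt 𝕜 h₁ x) (hh₂ : DifferentiableAt 𝕜 h₂ x)
    (h₁x : h₁ x ≠ 0) (h₂x : h₂ x ≠ 0) (hrot : fderiv 𝕜 h₁ x v = β x * h₂ x) :
    gaussTerm (fun y => β y * h₂ y / h₁ y) (fun y => ψ y / h₂ y ^ 2) v x =
      (ψ x * fderiv 𝕜 β x v + β x * fderiv 𝕜 ψ x v / 2) / (h₁ x * h₂ x) := by
  have h2 : (2 : 𝕜) ≠ 0 := two_ne_zero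
  rw [gaussTerm, fderiv_fun_div_apply (hβ.fun_mul hh₂) hh₁ h₁x, fderiv_fun_mul hβ hh₂,
    fderiv_div_sq_apply hψ hh₂ h₂x, hrot]
  simp only [add_apply, smul_apply, smul_eq_mul]
  field_simp
  ring

end Directional

theorem pd1_eq_deriv {f : ℝ × ℝ → ℝ} {q : ℝ × ℝ} (hf : DifferentiableAt ℝ f q) :
    pd1 f q = deriv (fun x => f (x, q.2)) q.1 :=
  (hf.hasFDerivAt.comp_hasDerivAt q.1
    ((hasDerivAt_id q.1).prodMk (hasDerivAt_const q.1 q.2))).deriv.symm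

theorem pd2_eq_deriv {f : ℝ × ℝ → ℝ} {q : ℝ × ℝ} (hf : DifferentiableAt ℝ f q) :
    pd2 f q = deriv (fun y => f (q.1, y)) q.2 :=
  (hf.hasFDerivAt.comp_hasDerivAt q.2
    ((hasDerivAt_const q.2 q.1).prodMk (hasDerivAt_id q.2))).deriv.symm

theorem hasDerivAt_quadratic {𝕜 : Type*} [NontriviallyNormedField 𝕜] (a b c t : 𝕜) :
    HasDerivAt (fun t => a * t ^ 2 + b * t + c) (2 * a * t + b) t := by
  refine ((((hasDerivAt_id' t).fun_pow 2).const_mul a).fun_add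
    ((hasDerivAt_id' t).const_mul b)).add_const c |>.congr_deriv ?_
  push_cast
  ring

theorem two_mul_quadratic_sub_quadratic {R : Type*} [CommRing R] (a b c x y : R) :
    2 * ((a * x ^ 2 + b * x + c) - (a * y ^ 2 + b * y + c)) =
      (x - y) * ((2 * a * x + b) + (2 * a * y + b)) := by
  ring

/-- The Lamé coefficient `h₁ = p(R²) / (R¹ − R²)`, for which `G¹¹ = (a(R¹)² + bR¹ + c) / h₁²`. -/
noncomputable def lame₁ (p : ℝ → ℝ) (q : ℝ × ℝ) : ℝ := p q.2 / (q.1 - q.2)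

/-- The Lamé coefficient `h₂ = (p + p′ (R¹ − R²)) / (R¹ − R²)`, for which
`G²² = −(a(R²)² + bR² + c + p²) / h₂²`. -/
noncomputable def lame₂ (p : ℝ → ℝ) (q : ℝ × ℝ) : ℝ :=
  (p q.2 + deriv p q.2 * (q.1 - q.2)) / (q.1 - q.2)

section Revolution

variable {p : ℝ → ℝ} {q : ℝ × ℝ}

theorem lame₁_ne_zero (hq : q.1 ≠ q.2) (hpq : p q.2 ≠ 0) : lame₁ p q ≠ 0 :=
  div_ne_zero hpq (sub_ne_zero.2 hq)

theorem lame₂_ne_zero (hq : q.1 ≠ q.2) (hD : p q.2 + deriv p q.2 * (q.1 - q.2) ≠ 0) :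
    lame₂ p q ≠ 0 :=
  div_ne_zero hD (sub_ne_zero.2 hq)

theorem differentiableAt_lame₁ (hq : q.1 ≠ q.2) (hp : DifferentiableAt ℝ p q.2) :
    DifferentiableAt ℝ (lame₁ p) q := by
  have hs := sub_ne_zero.2 hq
  unfold lame₁
  fun_prop (disch := assumption)

theorem differentiableAt_lame₂ (hq : q.1 ≠ q.2) (hp : DifferentiableAt ℝ p q.2)
    (hp' : DifferentiableAt ℝ (deriv p) q.2) : DifferentiableAt ℝ (lame₂ p) q := by
  have hs := sub_ne_zero.2 hq
  unfold lame₂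
  fun_prop (disch := assumption)

theorem pd2_lame₁ (hq : q.1 ≠ q.2) (hp : DifferentiableAt ℝ p q.2) :
    pd2 (lame₁ p) q = 1 / (q.1 - q.2) * lame₂ p q := by
  have hs := sub_ne_zero.2 hq
  have hderiv : HasDerivAt (fun y => lame₁ p (q.1, y))
      ((deriv p q.2 * (q.1 - q.2) - p q.2 * -1) / (q.1 - q.2) ^ 2) q.2 :=
    hp.hasDerivAt.fun_div ((hasDerivAt_id' q.2).const_sub q.1) hs
  rw [pd2_eq_deriv (differentiableAt_lame₁ hq hp), hderiv.deriv, lame₂]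
  field_simp
  ring

theorem pd1_lame₂ (hq : q.1 ≠ q.2) (hp : DifferentiableAt ℝ p q.2)
    (hp' : DifferentiableAt ℝ (deriv p) q.2) :
    pd1 (lame₂ p) q = 1 / (q.2 - q.1) * lame₁ p q := by
  have hs := sub_ne_zero.2 hq
  have hsub : HasDerivAt (fun x => x - q.2) 1 q.1 := (hasDerivAt_id' q.1).sub_const q.2
  have hderiv : HasDerivAt (fun x => lame₂ p (x, q.2))
      ((deriv p q.2 * 1 * (q.1 - q.2) - (p q.2 + deriv p q.2 * (q.1 - q.2)) * 1) /
        (q.1 - q.2) ^ 2) q.1 :=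
    ((hsub.const_mul (deriv p q.2)).const_add (p q.2)).fun_div hsub hs
  rw [pd1_eq_deriv (differentiableAt_lame₂ hq hp hp'), hderiv.deriv, lame₁,
    ← neg_sub q.1 q.2]
  field_simp
  ring

theorem one_div_add_deriv_div_eq_mul_lame₂_div_lame₁ (hq : q.1 ≠ q.2) (hpq : p q.2 ≠ 0) :
    1 / (q.1 - q.2) + deriv p q.2 / p q.2 = 1 / (q.1 - q.2) * lame₂ p q / lame₁ p q := by
  have hs := sub_ne_zero.2 hq
  rw [lame₁, lame₂]
  field_simp

theorem one_div_add_deriv_div_eq_mul_lame₁_div_lame₂ (hq : q.1 ≠ q.2)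
    (hD : p q.2 + deriv p q.2 * (q.1 - q.2) ≠ 0) :
    1 / (q.2 - q.1) + deriv p q.2 / (p q.2 + deriv p q.2 * (q.1 - q.2)) =
      1 / (q.2 - q.1) * lame₁ p q / lame₂ p q := by
  have hs := sub_ne_zero.2 hq
  rw [mul_div_assoc, lame₁, lame₂, div_div_div_cancel_right₀ hs, ← neg_sub q.1 q.2]
  generalize hE : p q.2 + deriv p q.2 * (q.1 - q.2) = D at hD ⊢
  field_simp
  linear_combination hE

theorem sq_mul_div_sq_eq_div_lame₁_sq (F : ℝ) :
    (q.1 - q.2) ^ 2 * F / p q.2 ^ 2 = F / lame₁ p q ^ 2 := by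
  rw [lame₁, div_pow, div_div_eq_mul_div, mul_comm]

theorem neg_sq_mul_div_sq_eq_neg_div_lame₂_sq (F : ℝ) :
    -((q.1 - q.2) ^ 2 * F / (p q.2 + deriv p q.2 * (q.1 - q.2)) ^ 2) = -F / lame₂ p q ^ 2 := by
  rw [lame₂, div_pow, div_div_eq_mul_div, neg_mul, neg_div, mul_comm F]

theorem pd1_one_div_sub (hq : q.1 ≠ q.2) :
    pd1 (fun r => 1 / (r.2 - r.1)) q = 1 / (q.1 - q.2) ^ 2 := by
  have hs := sub_ne_zero.2 hq.symm
  have hderiv : HasDerivAt (fun x => 1 / (q.2 - x)) (-(-1) / (q.2 - q.1) ^ 2) q.1 := by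
    simpa only [one_div] using ((hasDerivAt_id' q.1).const_sub q.2).fun_inv hs
  rw [pd1_eq_deriv (by fun_prop (disch := assumption)), hderiv.deriv]
  ring

theorem pd2_one_div_sub (hq : q.1 ≠ q.2) :
    pd2 (fun r => 1 / (r.1 - r.2)) q = 1 / (q.1 - q.2) ^ 2 := by
  have hs := sub_ne_zero.2 hq
  have hderiv : HasDerivAt (fun y => 1 / (q.1 - y)) (-(-1) / (q.1 - q.2) ^ 2) q.2 := by
    simpa only [one_div] using ((hasDerivAt_id' q.2).const_sub q.1).fun_inv hs
  rw [pd2_eq_deriv (by fun_prop (disch := assumption)), hderiv.deriv]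
  ring

theorem gaussTerm_lame_snd {ψ : ℝ → ℝ} (hq : q.1 ≠ q.2) (hpq : p q.2 ≠ 0)
    (hD : p q.2 + deriv p q.2 * (q.1 - q.2) ≠ 0) (hp : DifferentiableAt ℝ p q.2)
    (hp' : DifferentiableAt ℝ (deriv p) q.2) (hψ : DifferentiableAt ℝ ψ q.2) :
    gaussTerm (fun r => 1 / (r.1 - r.2) * lame₂ p r / lame₁ p r)
        (fun r => ψ r.2 / lame₂ p r ^ 2) (0, 1) q =
      (ψ q.2 + (q.1 - q.2) / 2 * deriv ψ q.2) /
        (p q.2 * (p q.2 + deriv p q.2 * (q.1 - q.2))) := by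
  have hs := sub_ne_zero.2 hq
  have hψ₂ : DifferentiableAt ℝ (fun r : ℝ × ℝ => ψ r.2) q := by fun_prop
  rw [gaussTerm_of_fderiv_eq_mul (by fun_prop (disch := assumption)) hψ₂
    (differentiableAt_lame₁ hq hp) (differentiableAt_lame₂ hq hp hp')
    (lame₁_ne_zero hq hpq) (lame₂_ne_zero hq hD) (pd2_lame₁ hq hp), ← pd2, ← pd2,
    pd2_one_div_sub hq, pd2_eq_deriv hψ₂, lame₁, lame₂]
  field_simp

theorem gaussTerm_lame_fst {φ : ℝ → ℝ} (hq : q.1 ≠ q.2) (hpq : p q.2 ≠ 0)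
    (hD : p q.2 + deriv p q.2 * (q.1 - q.2) ≠ 0) (hp : DifferentiableAt ℝ p q.2)
    (hp' : DifferentiableAt ℝ (deriv p) q.2) (hφ : DifferentiableAt ℝ φ q.1) :
    gaussTerm (fun r => 1 / (r.2 - r.1) * lame₁ p r / lame₂ p r)
        (fun r => φ r.1 / lame₁ p r ^ 2) (1, 0) q =
      (φ q.1 - (q.1 - q.2) / 2 * deriv φ q.1) /
        (p q.2 * (p q.2 + deriv p q.2 * (q.1 - q.2))) := by
  have hs := sub_ne_zero.2 hq
  have hs' := sub_ne_zero.2 hq.symm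
  have hφ₁ : DifferentiableAt ℝ (fun r : ℝ × ℝ => φ r.1) q := by fun_prop
  rw [gaussTerm_of_fderiv_eq_mul (by fun_prop (disch := assumption)) hφ₁
    (differentiableAt_lame₂ hq hp hp') (differentiableAt_lame₁ hq hp)
    (lame₂_ne_zero hq hD) (lame₁_ne_zero hq hpq) (pd1_lame₂ hq hp hp'), ← pd1, ← pd1,
    pd1_one_div_sub hq, pd1_eq_deriv hφ₁, lame₁, lame₂, ← neg_sub q.1 q.2]
  field_simp
  ring

theorem pd2_div_lame₁_sq {φ : ℝ → ℝ} (hq : q.1 ≠ q.2) (hpq : p q.2 ≠ 0)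
    (hp : DifferentiableAt ℝ p q.2) (hφ : DifferentiableAt ℝ φ q.1) :
    pd2 (fun r => φ r.1 / lame₁ p r ^ 2) q =
      -2 * (1 / (q.1 - q.2) * lame₂ p q / lame₁ p q) * (φ q.1 / lame₁ p q ^ 2) := by
  have hφ₁ : DifferentiableAt ℝ (fun r : ℝ × ℝ => φ r.1) q := by fun_prop
  rw [pd2, fderiv_div_sq_apply hφ₁ (differentiableAt_lame₁ hq hp) (lame₁_ne_zero hq hpq),
    ← pd2, ← pd2, pd2_eq_deriv hφ₁, pd2_lame₁ hq hp]
  simp only [deriv_const]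
  ring

theorem pd1_div_lame₂_sq {ψ : ℝ → ℝ} (hq : q.1 ≠ q.2)
    (hD : p q.2 + deriv p q.2 * (q.1 - q.2) ≠ 0) (hp : DifferentiableAt ℝ p q.2)
    (hp' : DifferentiableAt ℝ (deriv p) q.2) (hψ : DifferentiableAt ℝ ψ q.2) :
    pd1 (fun r => ψ r.2 / lame₂ p r ^ 2) q =
      -2 * (1 / (q.2 - q.1) * lame₁ p q / lame₂ p q) * (ψ q.2 / lame₂ p q ^ 2) := by
  have hψ₂ : DifferentiableAt ℝ (fun r : ℝ × ℝ => ψ r.2) q := by fun_prop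
  rw [pd1, fderiv_div_sq_apply hψ₂ (differentiableAt_lame₂ hq hp hp') (lame₂_ne_zero hq hD),
    ← pd1, ← pd1, pd1_eq_deriv hψ₂, pd1_lame₂ hq hp hp']
  simp only [deriv_const]
  ring

theorem gaussTerm_add_gaussTerm_quadratic (a b c : ℝ) (hq : q.1 ≠ q.2) (hpq : p q.2 ≠ 0)
    (hD : p q.2 + deriv p q.2 * (q.1 - q.2) ≠ 0) (hp : DifferentiableAt ℝ p q.2)
    (hp' : DifferentiableAt ℝ (deriv p) q.2) :
    gaussTerm (fun r => 1 / (r.1 - r.2) * lame₂ p r / lame₁ p r)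
        (fun r => -(a * r.2 ^ 2 + b * r.2 + c + p r.2 ^ 2) / lame₂ p r ^ 2) (0, 1) q +
      gaussTerm (fun r => 1 / (r.2 - r.1) * lame₁ p r / lame₂ p r)
        (fun r => (a * r.1 ^ 2 + b * r.1 + c) / lame₁ p r ^ 2) (1, 0) q = -1 := by
  have hψ : HasDerivAt (fun t => -(a * t ^ 2 + b * t + c + p t ^ 2))
      (-(2 * a * q.2 + b + 2 * p q.2 * deriv p q.2)) q.2 := by
    simpa only [Nat.cast_ofNat, Nat.add_one_sub_one, pow_one] using
      ((hasDerivAt_quadratic a b c q.2).fun_add (hp.hasDerivAt.fun_pow 2)).fun_neg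
  have htrapezoid := two_mul_quadratic_sub_quadratic a b c q.1 q.2
  rw [gaussTerm_lame_snd hq hpq hD hp hp' hψ.differentiableAt, hψ.deriv,
    gaussTerm_lame_fst hq hpq hD hp hp' (hasDerivAt_quadratic a b c q.1).differentiableAt,
    (hasDerivAt_quadratic a b c q.1).deriv, ← add_div, div_eq_iff (mul_ne_zero hpq hD)]
  linear_combination htrapezoid / 2

end Revolution

theorem conformal_revolution_general (a b c : ℝ) (p : ℝ → ℝ)
    (U : Set (ℝ × ℝ)) (hUopen : IsOpen U)
    (hp : ∀ q ∈ U, DifferentiableAt ℝ p q.2 ∧ DifferentiableAt ℝ (deriv p) q.2)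
    (hU : ∀ q ∈ U, q.1 ≠ q.2 ∧ p q.2 ≠ 0 ∧ p q.2 + deriv p q.2 * (q.1 - q.2) ≠ 0)
    (G11 G22 A B : ℝ × ℝ → ℝ)
    (hG11 : ∀ q ∈ U,
      G11 q = (q.1 - q.2) ^ 2 * (a * q.1 ^ 2 + b * q.1 + c) / (p q.2) ^ 2)
    (hG22 : ∀ q ∈ U,
      G22 q = -((q.1 - q.2) ^ 2 * (a * q.2 ^ 2 + b * q.2 + c + (p q.2) ^ 2) /
        (p q.2 + deriv p q.2 * (q.1 - q.2)) ^ 2))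
    (hA : ∀ q ∈ U, A q = 1 / (q.1 - q.2) + deriv p q.2 / p q.2)
    (hB : ∀ q ∈ U,
      B q = 1 / (q.2 - q.1) + deriv p q.2 / (p q.2 + deriv p q.2 * (q.1 - q.2))) :
    (∀ q ∈ U, pd2 G11 q = -2 * A q * G11 q ∧ pd1 G22 q = -2 * B q * G22 q) ∧
    (∀ q ∈ U,
      (pd2 A q + A q ^ 2) * G22 q + A q / 2 * pd2 G22 q +
        (pd1 B q + B q ^ 2) * G11 q + B q / 2 * pd1 G11 q + 1 = 0) := by
  have hA' : U.EqOn A (fun r => 1 / (r.1 - r.2) * lame₂ p r / lame₁ p r) := fun r hr =>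
    (hA r hr).trans (one_div_add_deriv_div_eq_mul_lame₂_div_lame₁ (hU r hr).1 (hU r hr).2.1)
  have hB' : U.EqOn B (fun r => 1 / (r.2 - r.1) * lame₁ p r / lame₂ p r) := fun r hr =>
    (hB r hr).trans (one_div_add_deriv_div_eq_mul_lame₁_div_lame₂ (hU r hr).1 (hU r hr).2.2)
  have hG11' : U.EqOn G11 (fun r => (a * r.1 ^ 2 + b * r.1 + c) / lame₁ p r ^ 2) := fun r hr =>
    (hG11 r hr).trans (sq_mul_div_sq_eq_div_lame₁_sq _)
  have hG22' : U.EqOn G22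
      (fun r => -(a * r.2 ^ 2 + b * r.2 + c + p r.2 ^ 2) / lame₂ p r ^ 2) := fun r hr =>
    (hG22 r hr).trans (neg_sq_mul_div_sq_eq_neg_div_lame₂_sq _)
  rw [← forall₂_and]
  intro q hq
  obtain ⟨hne, hpq, hD⟩ := hU q hq
  obtain ⟨hdp, hdp'⟩ := hp q hq
  have hnhds := hUopen.mem_nhds hq
  refine ⟨⟨?_, ?_⟩, ?_⟩
  · rw [pd2, (hG11'.eventuallyEq_of_mem hnhds).fderiv_eq, hA' hq, hG11' hq]
    exact pd2_div_lame₁_sq (φ := fun t => a * t ^ 2 + b * t + c) hne hpq hdp (by fun_prop)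
  · rw [pd1, (hG22'.eventuallyEq_of_mem hnhds).fderiv_eq, hB' hq, hG22' hq]
    exact pd1_div_lame₂_sq (ψ := fun t => -(a * t ^ 2 + b * t + c + p t ^ 2)) hne hD hdp hdp'
      (by fun_prop)
  · calc
      _ = gaussTerm A G22 (0, 1) q + gaussTerm B G11 (1, 0) q + 1 := by
        simp only [gaussTerm, pd1, pd2]
        ring
      _ = -1 + 1 := by
        rw [gaussTerm_congr (hA'.eventuallyEq_of_mem hnhds) (hG22'.eventuallyEq_of_mem hnhds),
          gaussTerm_congr (hB'.eventuallyEq_of_mem hnhds) (hG11'.eventuallyEq_of_mem hnhds),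
          gaussTerm_add_gaussTerm_quadratic a b c hne hpq hD hdp hdp']
      _ = 0 := neg_add_cancel 1

/-- For the metric of conformal transforms of surfaces of revolution, with
`G¹¹ = (R¹ − R²)²(a(R¹)² + bR¹ + c)/p(R²)²` and
`G²² = −(R¹ − R²)²(a(R²)² + bR² + c + p(R²)²)/(p(R²) + p′(R²)(R¹ − R²))²`:
(i) `A = 1/(R¹ − R²) + p′/p`, `B = 1/(R² − R¹) + p′/(p + p′(R¹ − R²))`,
independent of `a, b, c`;
(ii) the constant-curvature-one condition holds for all `a, b, c`. -/
theorem conformal_revolution (a b c : ℝ) (p : ℝ → ℝ)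
    (hp : ContDiff ℝ (⊤ : ℕ∞) p) (hppos : ∀ t, 0 < p t)
    (U : Set (ℝ × ℝ)) (hUopen : IsOpen U)
    (hU : ∀ q ∈ U, q.1 ≠ q.2 ∧ p q.2 + deriv p q.2 * (q.1 - q.2) ≠ 0 ∧
      0 < a * q.1 ^ 2 + b * q.1 + c ∧
      a * q.2 ^ 2 + b * q.2 + c + (p q.2) ^ 2 < 0)
    (G11 G22 A B : ℝ × ℝ → ℝ)
    (hG11 : ∀ q : ℝ × ℝ,
      G11 q = (q.1 - q.2) ^ 2 * (a * q.1 ^ 2 + b * q.1 + c) / (p q.2) ^ 2)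
    (hG22 : ∀ q : ℝ × ℝ,
      G22 q = -((q.1 - q.2) ^ 2 * (a * q.2 ^ 2 + b * q.2 + c + (p q.2) ^ 2) /
        (p q.2 + deriv p q.2 * (q.1 - q.2)) ^ 2))
    (hA : ∀ q : ℝ × ℝ, A q = 1 / (q.1 - q.2) + deriv p q.2 / p q.2)
    (hB : ∀ q : ℝ × ℝ,
      B q = 1 / (q.2 - q.1) + deriv p q.2 / (p q.2 + deriv p q.2 * (q.1 - q.2))) :
    (∀ q ∈ U, pd2 G11 q = -2 * A q * G11 q ∧ pd1 G22 q = -2 * B q * G22 q) ∧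
    (∀ q ∈ U,
      (pd2 A q + A q ^ 2) * G22 q + A q / 2 * pd2 G22 q +
        (pd1 B q + B q ^ 2) * G11 q + B q / 2 * pd1 G11 q + 1 = 0) := by
  obtain ⟨hdp, hcp'⟩ := contDiff_infty_iff_deriv.1 hp
  exact conformal_revolution_general a b c p U hUopen
    (fun q _ => ⟨hdp q.2, hcp'.differentiable (by simp) q.2⟩)
    (fun q hq => ⟨(hU q hq).1, (hppos q.2).ne', (hU q hq).2.1⟩) G11 G22 A B
    (fun q _ => hG11 q) (fun q _ => hG22 q) (fun q _ => hA q) fun q _ => hB q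
end

section
/- On the open set U = {(R¹,R²) ∈ ℝ² : R¹ > 0, R² > 0, R¹ ≠ R², R¹ + R² ≠ 0}, the functions k¹ = (R¹ + R²)²(R¹)^{−5/2}(R²)^{−3/2} and k² = (R¹ + R²)²(R¹)^{−3/2}(R²)^{−5/2} satisfy the Codazzi system (∂₂k¹)/(k² − k¹) = 1/(2(R² − R¹)) − 1/(R¹ + R²) and (∂₁k²)/(k¹ − k²) = 1/(2(R¹ − R²)) − 1/(R¹ + R²). -/
/-!
On the open quadrant, `k¹` and `k²` have the form `k = (R¹ + R²)ⁿ (R¹)ᵃ (R²)ᵇ`, so `∂₂k¹` is `k¹`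
times the rational logarithmic derivative `n / (R¹ + R²) + b / R²`. Since `k² / k¹ = R¹ / R²`, the
factor `k¹` cancels from `∂₂k¹ / (k² − k¹)`, and partial fractions give the first Codazzi equation.
The second is its image under the exchange of `R¹` and `R²`, which interchanges `k¹` and `k²`.
-/

/-- The function `(R¹ + R²)ⁿ (R¹)ᵃ (R²)ᵇ`. The radii of principal curvature `k¹` and `k²` are the
cases `(n, a, b) = (2, -5/2, -3/2)` and `(2, -3/2, -5/2)`. The exponents `a` and `b` are real, so
only the values on the open quadrant `R¹, R² > 0` are meaningful. -/
noncomputable def principalRadius (n : ℕ) (a b : ℝ) (p : ℝ × ℝ) : ℝ :=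
  (p.1 + p.2) ^ n * p.1 ^ a * p.2 ^ b

theorem pd1_eq_pd2_comp_swap (f : ℝ × ℝ → ℝ) (p : ℝ × ℝ) :
    pd1 f p = pd2 (f ∘ Prod.swap) p.swap := by
  have hswap := (ContinuousLinearEquiv.prodComm ℝ ℝ ℝ).comp_right_fderiv (f := f) (x := p.swap)
  exact (DFunLike.congr_fun hswap (0, 1)).symm

theorem pd2_eq_of_hasDerivAt {f : ℝ × ℝ → ℝ} {p : ℝ × ℝ} {f' : ℝ} (hf : DifferentiableAt ℝ f p)
    (hf' : HasDerivAt (fun y ↦ f (p.1, y)) f' p.2) : pd2 f p = f' := by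
  have hline : HasDerivAt (fun y ↦ (p.1, y)) ((0 : ℝ), (1 : ℝ)) p.2 :=
    (hasDerivAt_const p.2 p.1).prodMk (hasDerivAt_id p.2)
  exact (hf.hasFDerivAt.comp_hasDerivAt p.2 hline).unique hf'

namespace principalRadius

variable (n : ℕ) (a b : ℝ) {p : ℝ × ℝ}

theorem apply_swap (p : ℝ × ℝ) : principalRadius n a b p.swap = principalRadius n b a p := by
  simp only [principalRadius, Prod.fst_swap, Prod.snd_swap]
  ring

theorem comp_swap : principalRadius n a b ∘ Prod.swap = principalRadius n b a :=
  funext (apply_swap n a b)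

theorem pos (hx : 0 < p.1) (hy : 0 < p.2) : 0 < principalRadius n a b p := by
  unfold principalRadius
  positivity

theorem differentiableAt (hx : p.1 ≠ 0) (hy : p.2 ≠ 0) :
    DifferentiableAt ℝ (principalRadius n a b) p := by
  unfold principalRadius
  fun_prop (disch := exact Or.inl ‹_›)

theorem pd2_eq_mul (hx : p.1 ≠ 0) (hy : p.2 ≠ 0) (hxy : p.1 + p.2 ≠ 0) :
    pd2 (principalRadius n a b) p =
      (n / (p.1 + p.2) + b / p.2) * principalRadius n a b p := by
  have hsum := ((hasDerivAt_id p.2).const_add p.1).fun_pow n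
  have hpow := Real.hasDerivAt_rpow_const (p := b) (Or.inl hy)
  refine pd2_eq_of_hasDerivAt (differentiableAt n a b hx hy)
    (((hsum.mul_const (p.1 ^ a)).fun_mul hpow).congr_deriv ?_)
  have hpred : (n : ℝ) * (p.1 + p.2) ^ (n - 1) = n / (p.1 + p.2) * (p.1 + p.2) ^ n := by
    cases n with
    | zero => simp
    | succ m =>
      rw [Nat.add_sub_cancel, pow_succ]
      field_simp
  simp only [id, hpred, Real.rpow_sub_one hy, principalRadius]
  ring

theorem add_one_sub_one (hx : p.1 ≠ 0) (hy : p.2 ≠ 0) :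
    principalRadius n (a + 1) (b - 1) p = p.1 / p.2 * principalRadius n a b p := by
  simp only [principalRadius, Real.rpow_add_one hx, Real.rpow_sub_one hy]
  ring

theorem pd2_div_sub (hx : 0 < p.1) (hy : 0 < p.2) (hne : p.1 ≠ p.2) :
    pd2 (principalRadius n a b) p /
        (principalRadius n (a + 1) (b - 1) p - principalRadius n a b p) =
      (n / 2 + b) / (p.1 - p.2) - n / 2 / (p.1 + p.2) := by
  have hsum : p.1 + p.2 ≠ 0 := (add_pos hx hy).ne'
  have hsub : p.1 - p.2 ≠ 0 := sub_ne_zero.mpr hne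
  calc
    _ = (n / (p.1 + p.2) + b / p.2) * principalRadius n a b p /
          ((p.1 / p.2 - 1) * principalRadius n a b p) := by
      rw [pd2_eq_mul n a b hx.ne' hy.ne' hsum, add_one_sub_one n a b hx.ne' hy.ne', sub_one_mul]
    _ = (n / (p.1 + p.2) + b / p.2) / (p.1 / p.2 - 1) :=
      mul_div_mul_right _ _ (pos n a b hx hy).ne'
    _ = (n / 2 + b) / (p.1 - p.2) - n / 2 / (p.1 + p.2) := by
      rw [div_sub_one hy.ne']
      field_simp
      ring

theorem pd2_div_sub_codazzi (hx : 0 < p.1) (hy : 0 < p.2) (hne : p.1 ≠ p.2) :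
    pd2 (principalRadius 2 (-5 / 2) (-3 / 2)) p /
        (principalRadius 2 (-3 / 2) (-5 / 2) p - principalRadius 2 (-5 / 2) (-3 / 2) p) =
      1 / (2 * (p.2 - p.1)) - 1 / (p.1 + p.2) := by
  have hquot := pd2_div_sub 2 (-5 / 2) (-3 / 2) hx hy hne
  rw [show (-5 / 2 : ℝ) + 1 = -3 / 2 by norm_num, show (-3 / 2 : ℝ) - 1 = -5 / 2 by norm_num]
    at hquot
  rw [hquot, ← neg_sub p.1 p.2, mul_neg, div_neg, ← div_div]
  push_cast
  ring

end principalRadius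

/-- The functions `k¹ = (R¹ + R²)²(R¹)^{−5/2}(R²)^{−3/2}`,
`k² = (R¹ + R²)²(R¹)^{−3/2}(R²)^{−5/2}` satisfy the Codazzi system
`(∂₂k¹)/(k² − k¹) = 1/(2(R² − R¹)) − 1/(R¹ + R²)`,
`(∂₁k²)/(k¹ − k²) = 1/(2(R¹ − R²)) − 1/(R¹ + R²)`. -/
theorem finikov_gambier_codazzi
    (U : Set (ℝ × ℝ))
    (hUdef : U = {p : ℝ × ℝ | 0 < p.1 ∧ 0 < p.2 ∧ p.1 ≠ p.2 ∧ p.1 + p.2 ≠ 0})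
    (k1 k2 : ℝ × ℝ → ℝ)
    (hk1 : ∀ p : ℝ × ℝ,
      k1 p = (p.1 + p.2) ^ 2 * p.1 ^ (-(5 : ℝ) / 2) * p.2 ^ (-(3 : ℝ) / 2))
    (hk2 : ∀ p : ℝ × ℝ,
      k2 p = (p.1 + p.2) ^ 2 * p.1 ^ (-(3 : ℝ) / 2) * p.2 ^ (-(5 : ℝ) / 2)) :
    ∀ p ∈ U,
      pd2 k1 p / (k2 p - k1 p) = 1 / (2 * (p.2 - p.1)) - 1 / (p.1 + p.2) ∧
      pd1 k2 p / (k1 p - k2 p) = 1 / (2 * (p.1 - p.2)) - 1 / (p.1 + p.2) := by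
  obtain rfl : k1 = principalRadius 2 (-5 / 2) (-3 / 2) := funext hk1
  obtain rfl : k2 = principalRadius 2 (-3 / 2) (-5 / 2) := funext hk2
  subst hUdef
  rintro p ⟨hx, hy, hne, -⟩
  refine ⟨principalRadius.pd2_div_sub_codazzi hx hy hne, ?_⟩
  have hswap := principalRadius.pd2_div_sub_codazzi (p := p.swap) hy hx hne.symm
  rw [principalRadius.apply_swap, principalRadius.apply_swap] at hswap
  rw [pd1_eq_pd2_comp_swap, principalRadius.comp_swap, add_comm p.1 p.2]
  exact hswap
end
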